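/- For every integer n ≥ 1, the Wang shift Ω_n is aperiodic: Ω_n is nonempty, and for every valid configuration x ∈ Ω_n and every k ∈ ℤ^2 with k ≠ (0,0), one has σ^k(x) ≠ x. -/

import Mathlib

structure WangTile (C : Type*) where
  right : C
  top : C
  left : C
  bottom : C
deriving DecidableEq

abbrev Lbl : Type := ℤ × ℤ × ℤ

def Vn (n : ℤ) : Set Lbl :=
  {v | 0 ≤ v.1 ∧ v.1 ≤ v.2.1 ∧ v.2.1 ≤ 1 ∧ v.2.1 ≤ v.2.2 ∧ v.2.2 ≤ n + 1}

def hatT {C : Type*} (t : WangTile C) : WangTile C :=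
  ⟨t.top, t.right, t.bottom, t.left⟩

def whiteTiles (n : ℤ) : Set (WangTile Lbl) :=
  {t | ∃ i j : ℤ, 1 ≤ i ∧ i ≤ n ∧ 1 ≤ j ∧ j ≤ n ∧
    t = ⟨(1, 1, i + 1), (1, 1, j + 1), (1, 1, i), (1, 1, j)⟩}

def blueH (n : ℤ) : Set (WangTile Lbl) :=
  {t | ∃ i : ℤ, 0 ≤ i ∧ i ≤ n ∧ t = ⟨(0, 0, i + 1), (1, 1, 1), (0, 0, i), (1, 1, n)⟩}

def greenH (n : ℤ) : Set (WangTile Lbl) :=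
  {t | ∃ i : ℤ, 0 ≤ i ∧ i ≤ n ∧ t = ⟨(0, 1, i + 1), (1, 1, 1), (0, 0, i), (1, 1, n + 1)⟩}

def yellowH (n : ℤ) : Set (WangTile Lbl) :=
  {t | ∃ i : ℤ, 1 ≤ i ∧ i ≤ n ∧ t = ⟨(0, 1, i + 1), (1, 1, 2), (0, 1, i), (1, 1, n + 1)⟩}

def antiH (n : ℤ) : Set (WangTile Lbl) :=
  {t | ∃ i : ℤ, 1 ≤ i ∧ i ≤ n ∧ t = ⟨(0, 0, i + 1), (1, 1, 2), (0, 1, i), (1, 1, n)⟩}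

def junctionTile (n k l r s : ℤ) : WangTile Lbl :=
  ⟨(0, k, l), (0, r, s), (0, s, r + n), (0, l, k + n)⟩

def jPairs : Set (ℤ × ℤ) := {(0, 0), (0, 1), (1, 1)}

def junctions (n : ℤ) : Set (WangTile Lbl) :=
  {t | ∃ k l r s : ℤ, (k, l) ∈ jPairs ∧ (r, s) ∈ jPairs ∧ t = junctionTile n k l r s}

def Text (n : ℤ) : Set (WangTile Lbl) :=
  whiteTiles n ∪ blueH n ∪ greenH n ∪ yellowH n ∪ antiH n ∪
    hatT '' blueH n ∪ hatT '' greenH n ∪ hatT '' yellowH n ∪ hatT '' antiH n ∪ junctions n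

def Dset (n : ℤ) : Set (WangTile Lbl) :=
  {(⟨(0, 0, n + 1), (1, 1, 1), (0, 0, n), (1, 1, n)⟩ : WangTile Lbl),
    hatT (⟨(0, 0, n + 1), (1, 1, 1), (0, 0, n), (1, 1, n)⟩ : WangTile Lbl),
    junctionTile n 0 0 1 1, junctionTile n 1 1 0 0}

def Tmet (n : ℤ) : Set (WangTile Lbl) :=
  Text n \ (antiH n ∪ hatT '' antiH n ∪ Dset n)

def ValidConfig {C : Type*} (T : Set (WangTile C)) (x : ℤ × ℤ → WangTile C) : Prop :=
  (∀ m, x m ∈ T) ∧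
    (∀ m : ℤ × ℤ, (x m).right = (x (m.1 + 1, m.2)).left) ∧
    (∀ m : ℤ × ℤ, (x m).top = (x (m.1, m.2 + 1)).bottom)

def ValidPattern {C : Type*} (T : Set (WangTile C)) (w h : ℕ) (p : ℕ → ℕ → WangTile C) : Prop :=
  (∀ i j, i < w → j < h → p i j ∈ T) ∧
    (∀ i j, i + 1 < w → j < h → (p i j).right = (p (i + 1) j).left) ∧
    (∀ i j, i < w → j + 1 < h → (p i j).top = (p i (j + 1)).bottom)

def bottomWord {C : Type*} (w : ℕ) (p : ℕ → ℕ → WangTile C) : List C :=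
  (List.range w).map fun i => (p i 0).bottom

def topWord {C : Type*} (w h : ℕ) (p : ℕ → ℕ → WangTile C) : List C :=
  (List.range w).map fun i => (p i (h - 1)).top

def leftWord {C : Type*} (h : ℕ) (p : ℕ → ℕ → WangTile C) : List C :=
  (List.range h).map fun j => (p 0 j).left

def rightWord {C : Type*} (w h : ℕ) (p : ℕ → ℕ → WangTile C) : List C :=
  (List.range h).map fun j => (p (w - 1) j).right

def tau (n : ℤ) (v : Lbl) : List Lbl :=
  if v.1 = v.2.2 then
    (0, v.1 - v.2.1 + 1, n + 1) :: List.replicate (n - v.2.2).toNat (1, 1, n + 1)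
  else
    (0, v.1 - v.2.1 + 1, n) ::
      (List.replicate (v.2.2 - v.1 - 1).toNat (1, 1, n) ++
        List.replicate (n + 1 - v.2.2).toNat (1, 1, n + 1))

/-!
Let `β` be the metallic mean, the positive root of `β ^ 2 = n * β + 1`.

Every tile satisfies an additive identity. Summed over a square of side `N` of a valid
configuration, it bounds `N ^ 2 - D * (n * N + C)` by a multiple of the perimeter, where `D` and
`C` count the rows and the columns of the square carrying labels with first entry `0`; transposing
the configuration exchanges `D` and `C`. Subtracting the two estimates bounds `D - C`, so
`N ^ 2 - n * N * D - D ^ 2 = ((β - n) * N - D) * (β * N + D)` is of order `N` and `D` differs from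
`(β - n) * N` by a bounded amount. As `β` is irrational, the sequence of row types is not periodic.

Conversely, the rotation by `β` in both coordinates of the torus `(ℝ / ℤ) ^ 2` is coded by tiles,
and the coding of any orbit is a valid configuration.
-/

open Finset Function

section Sums

theorem sum_range_mul_of_periodic {M : Type*} [AddCommMonoid M] {f : ℕ → M} {p : ℕ}
    (hf : Periodic f p) (k : ℕ) : ∑ j ∈ range (k * p), f j = k • ∑ j ∈ range p, f j := by
  induction k with
  | zero => simp
  | succ k ih =>
    have hshift : ∀ j, f (k * p + j) = f j := fun j => by rw [add_comm]; exact hf.nat_mul k j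
    rw [Nat.succ_mul, sum_range_add, ih, succ_nsmul, sum_congr rfl fun j _ => hshift j]

theorem not_periodic_of_bounded_discrepancy {α K : ℝ} (hα : Irrational α) {f : ℤ → ℤ}
    (hf : ∀ N : ℕ, |((∑ j ∈ range N, f j : ℤ) : ℝ) - α * N| ≤ K) {q : ℤ} (hq : q ≠ 0) :
    ¬ Periodic f q := by
  intro hper
  wlog hpos : 0 < q generalizing q
  · exact this (neg_ne_zero.2 hq) hper.neg (by omega)
  lift q to ℕ using hpos.le
  have hper' : Periodic (fun j : ℕ => f j) q := fun j => by exact_mod_cast hper j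
  set g := ∑ j ∈ range q, f j
  have hbound : ∀ k : ℕ, k * |g - α * q| ≤ K := fun k => by
    have h := hf (k * q)
    rw [sum_range_mul_of_periodic hper', nsmul_eq_mul] at h
    rwa [show ((k * g : ℤ) : ℝ) - α * (k * q : ℕ) = k * (g - α * q) by push_cast; ring,
      abs_mul, Nat.abs_cast] at h
  have hne : (g : ℝ) - α * q ≠ 0 :=
    sub_ne_zero.2 ((hα.mul_natCast (by omega)).ne_int g).symm
  obtain ⟨k, hk⟩ := Archimedean.arch (K + 1) (abs_pos.2 hne)
  rw [nsmul_eq_mul] at hk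
  linarith [hbound k]

theorem sum_range_sum_range_divergence {G : Type*} [AddCommGroup G] (u v : ℕ → ℕ → G)
    (N M : ℕ) :
    ∑ i ∈ range N, ∑ j ∈ range M, ((u (i + 1) j - u i j) + (v i (j + 1) - v i j)) =
      ∑ j ∈ range M, (u N j - u 0 j) + ∑ i ∈ range N, (v i M - v i 0) := by
  simp_rw [sum_add_distrib (f := fun j => u _ j - u _ j), sum_range_sub, sum_add_distrib]
  rw [sum_comm]
  simp_rw [fun j => sum_range_sub (fun i => u i j) N]

theorem abs_sum_range_sub_le {R : Type*} [CommRing R] [LinearOrder R] [IsStrictOrderedRing R]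
    {f g : ℕ → R} {b : R} (hf : ∀ i, f i ∈ Set.Icc 0 b) (hg : ∀ i, g i ∈ Set.Icc 0 b) (N : ℕ) :
    |∑ i ∈ range N, (f i - g i)| ≤ N * b :=
  calc |∑ i ∈ range N, (f i - g i)| ≤ ∑ i ∈ range N, |f i - g i| := abs_sum_le_sum_abs _ _
    _ ≤ #(range N) • b := sum_le_card_nsmul _ _ _ fun i _ =>
        abs_sub_le_of_nonneg_of_le (hf i).1 (hf i).2 (hg i).1 (hg i).2
    _ = N * b := by rw [card_range, nsmul_eq_mul]

end Sums

section MetallicMean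

/-- The `n`-th metallic mean, the positive root of `X ^ 2 - n * X - 1`. -/
noncomputable def metallicMean (n : ℤ) : ℝ :=
  (n + √(n ^ 2 + 4)) / 2

variable {n : ℤ}

theorem metallicMean_sq (n : ℤ) : metallicMean n ^ 2 = n * metallicMean n + 1 := by
  have hsq : √((n : ℝ) ^ 2 + 4) ^ 2 = n ^ 2 + 4 := Real.sq_sqrt (by positivity)
  rw [metallicMean]
  linear_combination hsq / 4

theorem lt_metallicMean (n : ℤ) : n < metallicMean n := by
  have hlt : (n : ℝ) < √(n ^ 2 + 4) := Real.lt_sqrt_of_sq_lt (by linarith)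
  rw [metallicMean]
  linarith

theorem metallicMean_lt_add_one (hn : 1 ≤ n) : metallicMean n < n + 1 := by
  have hn' : (1 : ℝ) ≤ n := by exact_mod_cast hn
  have hlt : √((n : ℝ) ^ 2 + 4) < n + 2 := (Real.sqrt_lt' (by linarith)).2 (by nlinarith)
  rw [metallicMean]
  linarith

theorem not_isSquare_sq_add_four (hn : 1 ≤ n) : ¬ IsSquare (n ^ 2 + 4) := by
  rintro ⟨r, hr⟩
  obtain ⟨q, hq, hqr⟩ : ∃ q : ℤ, 0 ≤ q ∧ q * q = n ^ 2 + 4 := ⟨|r|, abs_nonneg r, by simp [hr]⟩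
  have hlower : n + 1 ≤ q := by nlinarith
  have hupper : q ≤ n + 1 := by nlinarith
  obtain rfl : q = n + 1 := le_antisymm hupper hlower
  ring_nf at hqr
  omega

theorem irrational_metallicMean (hn : 1 ≤ n) : Irrational (metallicMean n) := by
  have hsqrt : Irrational (√((n ^ 2 + 4 : ℤ) : ℝ)) :=
    irrational_sqrt_intCast_iff.2 ⟨not_isSquare_sq_add_four hn, by positivity⟩
  have hmean : metallicMean n = (n + √((n ^ 2 + 4 : ℤ) : ℝ)) / (2 : ℕ) := by
    push_cast
    rfl
  exact hmean ▸ (hsqrt.intCast_add n).div_natCast two_ne_zero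

theorem abs_sub_mul_le_of_square_balance (hn : 1 ≤ n) {N C D K : ℝ} (hN : 0 < N) (hD : 0 ≤ D)
    (hDN : D ≤ N) (h₁ : |N ^ 2 - D * (n * N + C)| ≤ K * N)
    (h₂ : |N ^ 2 - C * (n * N + D)| ≤ K * N) : |D - (metallicMean n - n) * N| ≤ 3 * K := by
  have hn' : (1 : ℝ) ≤ n := by exact_mod_cast hn
  set β := metallicMean n
  have hβ : 1 ≤ β := hn'.trans (lt_metallicMean n).le
  have hCD : |C - D| ≤ 2 * K := by
    refine le_of_mul_le_mul_right ?_ (mul_pos (by linarith : (0 : ℝ) < n) hN)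
    calc |C - D| * (n * N) = |(C - D) * (n * N)| := by
          rw [abs_mul, abs_of_pos (by positivity : 0 < n * N)]
      _ = |(N ^ 2 - D * (n * N + C)) - (N ^ 2 - C * (n * N + D))| := by congr 1; ring
      _ ≤ 2 * K * N := by linarith [abs_sub (N ^ 2 - D * (n * N + C)) (N ^ 2 - C * (n * N + D))]
      _ ≤ 2 * K * (n * N) := by
        have hK : 0 ≤ K := nonneg_of_mul_nonneg_left ((abs_nonneg _).trans h₁) hN
        gcongr
        exact le_mul_of_one_le_left hN.le hn'
  refine le_of_mul_le_mul_right ?_ hN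
  calc |D - (β - n) * N| * N ≤ |D - (β - n) * N| * (β * N + D) := by
        gcongr
        nlinarith
    _ = |(D - (β - n) * N) * (β * N + D)| := by
      rw [abs_mul, abs_of_nonneg (by positivity : 0 ≤ β * N + D)]
    _ = |(N ^ 2 - D * (n * N + C)) + D * (C - D)| := by
      rw [← abs_neg]
      congr 1
      linear_combination N ^ 2 * metallicMean_sq n
    _ ≤ K * N + N * (2 * K) := by
      refine (abs_add_le _ _).trans (add_le_add h₁ ?_)
      rw [abs_mul, abs_of_nonneg hD]
      gcongr
    _ = 3 * K * N := by ring

end MetallicMean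

section Transpose

variable {C : Type*} {T : Set (WangTile C)} {x : ℤ × ℤ → WangTile C}

/-- The reflection of a configuration in the main diagonal, each tile being reflected too. -/
def transposeConfig (x : ℤ × ℤ → WangTile C) : ℤ × ℤ → WangTile C :=
  fun m => hatT (x m.swap)

theorem ValidConfig.mono {T' : Set (WangTile C)} (hT : T ⊆ T') (hx : ValidConfig T x) :
    ValidConfig T' x :=
  ⟨fun m => hT (hx.1 m), hx.2⟩

theorem ValidConfig.transpose (hT : Set.MapsTo hatT T T) (hx : ValidConfig T x) :
    ValidConfig T (transposeConfig x) :=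
  ⟨fun m => hT (hx.1 m.swap), fun m => hx.2.2 m.swap, fun m => hx.2.1 m.swap⟩

variable {n : ℤ}

theorem mapsTo_hatT_Text (n : ℤ) : Set.MapsTo hatT (Text n) (Text n) := by
  intro t ht
  simp only [Text, Set.mem_union] at ht ⊢
  rcases ht with ((((((((h | h) | h) | h) | h) | h) | h) | h) | h) | h
  · obtain ⟨i, j, hi, hi', hj, hj', rfl⟩ := h
    iterate 9 left
    exact ⟨j, i, hj, hj', hi, hi', rfl⟩
  iterate 4
    have := Set.mem_image_of_mem hatT h
    tauto
  iterate 4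
    obtain ⟨s, hs, rfl⟩ := h
    rw [show hatT (hatT s) = s from rfl]
    tauto
  · obtain ⟨k, l, r, s, hkl, hrs, rfl⟩ := h
    exact Or.inr ⟨r, s, k, l, hrs, hkl, rfl⟩

theorem mapsTo_hatT_Tmet (n : ℤ) : Set.MapsTo hatT (Tmet n) (Tmet n) := by
  rintro t ⟨ht, hnot⟩
  refine ⟨mapsTo_hatT_Text n ht, fun h => hnot ?_⟩
  rcases h with (h | ⟨s, hs, hst⟩) | h
  · exact Or.inl (Or.inr ⟨_, h, rfl⟩)
  · have hs' : s = t := congrArg hatT hst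
    exact Or.inl (Or.inl (hs' ▸ hs))
  · right
    simp only [Dset, Set.mem_insert_iff, Set.mem_singleton_iff] at h ⊢
    rcases h with h | h | h | h <;> have := congrArg hatT h <;> tauto

end Transpose

section TileIdentities

variable {n : ℤ} {t : WangTile Lbl}

theorem left_mem_Vn (hn : 1 ≤ n) (ht : t ∈ Text n) : t.left ∈ Vn n := by
  rcases ht with ((((((((h | h) | h) | h) | h) | h) | h) | h) | h) | h
  · obtain ⟨i, j, hi, hi', -, -, rfl⟩ := h
    simp only [Vn, Set.mem_ofPred_eq]; omega
  iterate 4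
    obtain ⟨i, hi, hi', rfl⟩ := h
    simp only [Vn, Set.mem_ofPred_eq]; omega
  iterate 4
    obtain ⟨_, ⟨i, -, -, rfl⟩, rfl⟩ := h
    simp only [hatT, Vn, Set.mem_ofPred_eq]; omega
  · obtain ⟨k, l, r, s, -, hrs, rfl⟩ := h
    simp only [jPairs, Set.mem_insert_iff, Set.mem_singleton_iff, Prod.mk.injEq] at hrs
    simp only [junctionTile, Vn, Set.mem_ofPred_eq]; omega

theorem bottom_mem_Vn (hn : 1 ≤ n) (ht : t ∈ Text n) : t.bottom ∈ Vn n :=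
  left_mem_Vn hn (mapsTo_hatT_Text n ht)

theorem right_fst_eq_left_fst (ht : t ∈ Text n) : t.right.1 = t.left.1 := by
  rcases ht with ((((((((h | h) | h) | h) | h) | h) | h) | h) | h) | h
  · obtain ⟨i, j, -, -, -, -, rfl⟩ := h; rfl
  iterate 4 obtain ⟨i, -, -, rfl⟩ := h; rfl
  iterate 4 obtain ⟨_, ⟨i, -, -, rfl⟩, rfl⟩ := h; rfl
  · obtain ⟨k, l, r, s, -, -, rfl⟩ := h; rfl

theorem tile_balance (ht : t ∈ Text n) :
    1 - (1 - t.left.1) * (n + (1 - t.bottom.1)) =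
      (t.right.2.1 - t.left.2.1) + (t.top.2.2 - t.bottom.2.2) := by
  rcases ht with ((((((((h | h) | h) | h) | h) | h) | h) | h) | h) | h
  · obtain ⟨i, j, -, -, -, -, rfl⟩ := h
    dsimp only; ring
  iterate 4
    obtain ⟨i, -, -, rfl⟩ := h
    dsimp only; ring
  iterate 4
    obtain ⟨_, ⟨i, -, -, rfl⟩, rfl⟩ := h
    dsimp only [hatT]; ring
  · obtain ⟨k, l, r, s, -, -, rfl⟩ := h
    dsimp only [junctionTile]; ring

end TileIdentities

section RowTypes

variable {n : ℤ} {x : ℤ × ℤ → WangTile Lbl}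

/-- The type of the `j`-th row, read off on its left edge in column `0`: it is `1` if the left and
right labels in this row have first entry `0`, as for the horizontal and the junction tiles, and it
is `0` if they have first entry `1`. The column types are the row types of
`transposeConfig x`. -/
def rowType (x : ℤ × ℤ → WangTile Lbl) (j : ℤ) : ℤ :=
  1 - (x (0, j)).left.1

theorem ValidConfig.left_fst_eq (hx : ValidConfig (Text n) x) (i j : ℤ) :
    (x (i, j)).left.1 = (x (0, j)).left.1 := by
  have hstep : ∀ i, (x (i + 1, j)).left.1 = (x (i, j)).left.1 := fun i => by
    rw [← right_fst_eq_left_fst (hx.1 (i, j)), hx.2.1 (i, j)]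
  induction i using Int.induction_on with
  | zero => rfl
  | succ i ih => rw [hstep, ih]
  | pred i ih => rw [← ih, ← hstep, sub_add_cancel]

theorem ValidConfig.one_sub_left_fst (hx : ValidConfig (Text n) x) (i j : ℤ) :
    1 - (x (i, j)).left.1 = rowType x j := by
  rw [rowType, hx.left_fst_eq]

theorem ValidConfig.one_sub_bottom_fst (hx : ValidConfig (Text n) x) (i j : ℤ) :
    1 - (x (i, j)).bottom.1 = rowType (transposeConfig x) i :=
  (hx.transpose (mapsTo_hatT_Text n)).one_sub_left_fst j i

theorem ValidConfig.rowType_mem_Icc (hn : 1 ≤ n) (hx : ValidConfig (Text n) x) (j : ℤ) :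
    rowType x j ∈ Set.Icc 0 1 := by
  have h := left_mem_Vn hn (hx.1 (0, j))
  simp only [Vn, Set.mem_ofPred_eq] at h
  simp only [rowType, Set.mem_Icc]
  omega

theorem ValidConfig.abs_rectangle_balance_le (hn : 1 ≤ n) (hx : ValidConfig (Text n) x)
    (N M : ℕ) :
    |(N * M : ℤ) - (∑ j ∈ range M, rowType x j) *
      (n * N + ∑ i ∈ range N, rowType (transposeConfig x) i)| ≤ M + N * (n + 1) := by
  let u : ℕ → ℕ → ℤ := fun i j => (x (i, j)).left.2.1
  let v : ℕ → ℕ → ℤ := fun i j => (x (i, j)).bottom.2.2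
  have hu : ∀ i j, u i j ∈ Set.Icc 0 1 := fun i j => by
    have h := left_mem_Vn hn (hx.1 (i, j))
    exact ⟨h.1.trans h.2.1, h.2.2.1⟩
  have hv : ∀ i j, v i j ∈ Set.Icc 0 (n + 1) := fun i j => by
    have h := bottom_mem_Vn hn (hx.1 (i, j))
    exact ⟨h.1.trans (h.2.1.trans h.2.2.2.1), h.2.2.2.2⟩
  have htile : ∀ i j : ℕ, 1 - rowType x j * (n + rowType (transposeConfig x) i) =
      (u (i + 1) j - u i j) + (v i (j + 1) - v i j) := fun i j => by
    have h := tile_balance (hx.1 (i, j))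
    rw [hx.one_sub_left_fst, hx.one_sub_bottom_fst, hx.2.1, hx.2.2] at h
    exact_mod_cast h
  calc _ = |∑ j ∈ range M, (u N j - u 0 j) + ∑ i ∈ range N, (v i M - v i 0)| := by
        rw [← sum_range_sum_range_divergence]
        simp_rw [← htile, sum_sub_distrib, ← sum_mul, ← mul_sum, sum_add_distrib, sum_const,
          card_range, nsmul_eq_mul]
        congr 1; ring
    _ ≤ |∑ j ∈ range M, (u N j - u 0 j)| + |∑ i ∈ range N, (v i M - v i 0)| := abs_add_le _ _
    _ ≤ M * 1 + N * (n + 1) := add_le_add (abs_sum_range_sub_le (hu N) (hu 0) M)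
        (abs_sum_range_sub_le (fun i => hv i M) (fun i => hv i 0) N)
    _ = M + N * (n + 1) := by rw [mul_one]

theorem ValidConfig.rowType_discrepancy_le (hn : 1 ≤ n) (hx : ValidConfig (Text n) x) (N : ℕ) :
    |((∑ j ∈ range N, rowType x j : ℤ) : ℝ) - (metallicMean n - n) * N| ≤ 3 * (n + 2) := by
  have hn' : (1 : ℝ) ≤ n := by exact_mod_cast hn
  rcases N.eq_zero_or_pos with rfl | hN
  · simpa using by linarith
  have hD : 0 ≤ ∑ j ∈ range N, rowType x j :=
    sum_nonneg fun j _ => (hx.rowType_mem_Icc hn j).1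
  have hDN : ∑ j ∈ range N, rowType x j ≤ N := by
    simpa using sum_le_card_nsmul (range N) _ 1 fun j _ => (hx.rowType_mem_Icc hn j).2
  have hrow := hx.abs_rectangle_balance_le hn N N
  have hcol := (hx.transpose (mapsTo_hatT_Text n)).abs_rectangle_balance_le hn N N
  rw [show transposeConfig (transposeConfig x) = x from rfl] at hcol
  have hperim : (N : ℤ) + N * (n + 1) = (n + 2) * N := by ring
  rw [hperim, ← sq] at hrow hcol
  refine abs_sub_mul_le_of_square_balance hn
    (C := (∑ i ∈ range N, rowType (transposeConfig x) i : ℤ)) (by exact_mod_cast hN)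
    (by exact_mod_cast hD) (by exact_mod_cast hDN) ?_ ?_
  · exact_mod_cast hrow
  · exact_mod_cast hcol

theorem ValidConfig.not_periodic_rowType (hn : 1 ≤ n) (hx : ValidConfig (Text n) x) {q : ℤ}
    (hq : q ≠ 0) : ¬ Periodic (rowType x) q :=
  not_periodic_of_bounded_discrepancy ((irrational_metallicMean hn).sub_intCast n)
    (hx.rowType_discrepancy_le hn) hq

theorem ValidConfig.periodic_rowType (hx : ValidConfig (Text n) x) {k : ℤ × ℤ}
    (hk : Periodic x k) : Periodic (rowType x) k.2 := fun j =>
  calc rowType x (j + k.2) = 1 - (x (k.1, j + k.2)).left.1 := (hx.one_sub_left_fst _ _).symm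
    _ = 1 - (x ((0, j) + k)).left.1 := by rw [Prod.add_def, zero_add]
    _ = rowType x j := by rw [hk, rowType]

theorem ValidConfig.not_periodic (hn : 1 ≤ n) (hx : ValidConfig (Text n) x) {k : ℤ × ℤ}
    (hk : k ≠ 0) : ¬ Periodic x k := by
  intro hper
  have hxt := hx.transpose (mapsTo_hatT_Text n)
  have hpert : Periodic (transposeConfig x) k.swap := fun m => congrArg hatT (hper m.swap)
  rcases ne_or_eq k.2 0 with hk₂ | hk₂
  · exact hx.not_periodic_rowType hn hk₂ (hx.periodic_rowType hper)
  · have hk₁ : k.1 ≠ 0 := fun hk₁ => hk (Prod.ext hk₁ hk₂)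
    exact hxt.not_periodic_rowType hn hk₁ (hxt.periodic_rowType hpert)

end RowTypes

section TileMembership

variable {n : ℤ}

theorem whiteTiles_subset_Tmet (n : ℤ) : whiteTiles n ⊆ Tmet n := by
  intro t ht
  refine ⟨by simp only [Text, Set.mem_union]; tauto, ?_⟩
  obtain ⟨i, j, -, -, -, -, rfl⟩ := ht
  simp [antiH, Dset, hatT, junctionTile]

theorem blueH_mem_Tmet {i : ℤ} (hi : 0 ≤ i) (hi' : i < n) :
    ⟨(0, 0, i + 1), (1, 1, 1), (0, 0, i), (1, 1, n)⟩ ∈ Tmet n := by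
  have ht : ⟨(0, 0, i + 1), (1, 1, 1), (0, 0, i), (1, 1, n)⟩ ∈ blueH n := ⟨i, hi, hi'.le, rfl⟩
  refine ⟨by simp only [Text, Set.mem_union]; tauto, ?_⟩
  simp [antiH, Dset, hatT, junctionTile, hi'.ne]

theorem greenH_subset_Tmet (n : ℤ) : greenH n ⊆ Tmet n := by
  intro t ht
  refine ⟨by simp only [Text, Set.mem_union]; tauto, ?_⟩
  obtain ⟨i, -, -, rfl⟩ := ht
  simp [antiH, Dset, hatT, junctionTile]

theorem yellowH_subset_Tmet (n : ℤ) : yellowH n ⊆ Tmet n := by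
  intro t ht
  refine ⟨by simp only [Text, Set.mem_union]; tauto, ?_⟩
  obtain ⟨i, -, -, rfl⟩ := ht
  simp [antiH, Dset, hatT, junctionTile]

theorem junctionTile_mem_Tmet {k l r s : ℤ} (hkl : (k, l) ∈ jPairs) (hrs : (r, s) ∈ jPairs)
    (hrl : l = 1 ∨ r = 0) (hks : s = 1 ∨ k = 0) : junctionTile n k l r s ∈ Tmet n := by
  refine ⟨Or.inr ⟨k, l, r, s, hkl, hrs, rfl⟩, ?_⟩
  rintro ((⟨i, -, -, h⟩ | ⟨_, ⟨i, -, -, rfl⟩, h⟩) | h)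
  · simp [junctionTile] at h
  · simp [junctionTile, hatT] at h
  · simp only [Dset, hatT, junctionTile, Set.mem_insert_iff, Set.mem_singleton_iff,
      WangTile.mk.injEq, Prod.mk.injEq] at h
    omega

end TileMembership

section TorusCoding

/-- The indicator function of the half-line `[c, ∞)`. -/
noncomputable def threshold (c z : ℝ) : ℤ :=
  if c ≤ z then 1 else 0

theorem threshold_of_le {c z : ℝ} (h : c ≤ z) : threshold c z = 1 := if_pos h

theorem threshold_of_lt {c z : ℝ} (h : z < c) : threshold c z = 0 := if_neg h.not_ge

theorem threshold_congr {c z d w : ℝ} (h : z - c = w - d) : threshold c z = threshold d w := by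
  unfold threshold
  congr 1
  rw [← sub_nonneg, h, sub_nonneg]

theorem threshold_eq_one_or_eq_zero {c z d w : ℝ} (h : d ≤ w → c ≤ z) :
    threshold c z = 1 ∨ threshold d w = 0 := by
  unfold threshold
  split_ifs <;> tauto

theorem threshold_mem_jPairs {c z d w : ℝ} (h : c ≤ z → d ≤ w) :
    (threshold c z, threshold d w) ∈ jPairs := by
  unfold threshold
  split_ifs <;> simp_all [jPairs]

theorem floor_eq_threshold_add {c z : ℝ} {m : ℤ} (hlow : m ≤ z) (hupp : z < m + 2)
    (hc : c = m + 1) : ⌊z⌋ = threshold c z + m := by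
  rcases lt_or_ge z c with h | h
  · rw [threshold_of_lt h, Int.floor_eq_iff]
    push_cast
    constructor <;> linarith
  · rw [threshold_of_le h, Int.floor_eq_iff]
    push_cast
    constructor <;> linarith

theorem floor_add_one_sub {c z : ℝ} (hlow : c - 1 ≤ z) (hupp : z < c + 1) :
    ⌊z + 1 - c⌋ = threshold c z := by
  rw [floor_eq_threshold_add (c := 1) (m := 0) (by push_cast; linarith) (by push_cast; linarith)
    (by simp), add_zero]
  exact threshold_congr (by ring)

/-- The label of the bottom edge of the tile coding the point `(x, y)` of the torus
`[0, 1) × [0, 1)`. The label of its left edge is the one of the bottom edge for `(y, x)`. -/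
noncomputable def bottomLabel (n : ℤ) (x y : ℝ) : Lbl :=
  if x + metallicMean n < n + 1 then (1, 1, ⌊metallicMean n * y + x⌋ + 1)
  else (0, threshold (metallicMean n) (metallicMean n * x + y), ⌊metallicMean n * y + x⌋)

/-- The tile coding the point `(x, y)` of the torus `[0, 1) × [0, 1)`. Its right and top labels are
the left label at `(x + β, y)` and the bottom label at `(x, y + β)`, where `β` is the metallic
mean. -/
noncomputable def torusTile (n : ℤ) (x y : ℝ) : WangTile Lbl :=
  ⟨bottomLabel n y (Int.fract (x + metallicMean n)),
    bottomLabel n x (Int.fract (y + metallicMean n)), bottomLabel n y x, bottomLabel n x y⟩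

variable {n : ℤ} {x y : ℝ}

local notation "β" => metallicMean n

theorem fract_add_metallicMean_of_lt (hx : 0 ≤ x) (h : x + β < n + 1) :
    Int.fract (x + β) = x + β - n :=
  Int.fract_eq_iff.2 ⟨by linarith [lt_metallicMean n], by linarith, n, by ring⟩

theorem fract_add_metallicMean_of_le (hn : 1 ≤ n) (hx : x < 1) (h : n + 1 ≤ x + β) :
    Int.fract (x + β) = x + β - (n + 1) :=
  Int.fract_eq_iff.2
    ⟨by linarith, by linarith [metallicMean_lt_add_one hn], n + 1, by push_cast; ring⟩

theorem floor_metallicMean_mul_add_sub (x y : ℝ) :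
    ⌊β * (x + β - n) + y⌋ = ⌊β * x + y⌋ + 1 := by
  rw [← Int.floor_add_one]
  congr 1
  linear_combination metallicMean_sq n

theorem metallicMean_mul_add_sub_add_one (x y : ℝ) :
    β * (x + β - (n + 1)) + y = β * x + y + 1 - β := by
  linear_combination metallicMean_sq n

theorem floor_mem_Ico_of_add_lt (hn : 1 ≤ n) (hx : 0 ≤ x) (hy : 0 ≤ y) (hxβ : x + β < n + 1)
    (hyβ : y + β < n + 1) : ⌊β * x + y⌋ ∈ Set.Ico 0 n := by
  have hn' : (1 : ℝ) ≤ n := by exact_mod_cast hn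
  have hβ := lt_metallicMean n
  have hβ0 : 0 ≤ β := by linarith
  refine ⟨Int.floor_nonneg.2 (by positivity), Int.floor_lt.2 ?_⟩
  nlinarith [metallicMean_sq n]

theorem torusTile_mem_whiteTiles (hn : 1 ≤ n) (hx : 0 ≤ x) (hy : 0 ≤ y) (hxβ : x + β < n + 1)
    (hyβ : y + β < n + 1) : torusTile n x y ∈ whiteTiles n := by
  obtain ⟨hi, hi'⟩ := floor_mem_Ico_of_add_lt hn hx hy hxβ hyβ
  obtain ⟨hj, hj'⟩ := floor_mem_Ico_of_add_lt hn hy hx hyβ hxβ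
  refine ⟨⌊β * x + y⌋ + 1, ⌊β * y + x⌋ + 1, by omega, by omega, by omega, by omega, ?_⟩
  simp only [torusTile, bottomLabel, if_pos hxβ, if_pos hyβ, fract_add_metallicMean_of_lt hx hxβ,
    fract_add_metallicMean_of_lt hy hyβ, floor_metallicMean_mul_add_sub]

theorem torusTile_of_lt_of_le (hn : 1 ≤ n) (hx : 0 ≤ x) (hy : y < 1) (hxβ : x + β < n + 1)
    (hyβ : n + 1 ≤ y + β) :
    torusTile n x y =
      ⟨(0, threshold n (β * y + x), ⌊β * x + y⌋ + 1), (1, 1, ⌊β * y + x + 1 - β⌋ + 1),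
        (0, threshold β (β * y + x), ⌊β * x + y⌋), (1, 1, ⌊β * y + x⌋ + 1)⟩ := by
  have hthreshold : threshold β (β * y + (x + β - n)) = threshold n (β * y + x) :=
    threshold_congr (by ring)
  simp only [torusTile, bottomLabel, if_pos hxβ, if_neg hyβ.not_gt,
    fract_add_metallicMean_of_lt hx hxβ, fract_add_metallicMean_of_le hn hy hyβ,
    floor_metallicMean_mul_add_sub, metallicMean_mul_add_sub_add_one, hthreshold]

theorem torusTile_mem_Tmet_of_lt_of_le (hn : 1 ≤ n) (hx : 0 ≤ x) (hy : y < 1)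
    (hxβ : x + β < n + 1) (hyβ : n + 1 ≤ y + β) : torusTile n x y ∈ Tmet n := by
  have hn' : (1 : ℝ) ≤ n := by exact_mod_cast hn
  have hsq := metallicMean_sq n
  have hlt := lt_metallicMean n
  have hβ : 0 < β := by linarith
  have hi : 0 ≤ ⌊β * x + y⌋ := Int.floor_nonneg.2 (by nlinarith)
  have hi' : ⌊β * x + y⌋ < n + 1 := Int.floor_lt.2 (by push_cast; nlinarith)
  have hlow : β - 1 ≤ β * y + x := by nlinarith
  have hupp : β * y + x < n + 1 := by nlinarith
  rw [torusTile_of_lt_of_le hn hx hy hxβ hyβ, floor_add_one_sub hlow (by linarith)]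
  rcases lt_or_ge (β * y + x) n with hblue | hge
  · have hbottom : ⌊β * y + x⌋ = n - 1 :=
      Int.floor_eq_iff.2 ⟨by push_cast; linarith, by push_cast; linarith⟩
    have hindex : β * x + y < n :=
      calc β * x + y < n * β * (1 - y) := by nlinarith
        _ ≤ n * β * (β - n) := mul_le_mul_of_nonneg_left (by linarith) (by positivity)
        _ = n := by linear_combination n * hsq
    rw [threshold_of_lt hblue, threshold_of_lt (hblue.trans hlt), hbottom, sub_add_cancel]
    exact blueH_mem_Tmet hi (Int.floor_lt.2 hindex)
  rw [threshold_of_le hge, Int.floor_eq_iff.2 ⟨hge, hupp⟩]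
  rcases lt_or_ge (β * y + x) β with hgreen | hyellow
  · rw [threshold_of_lt hgreen]
    exact greenH_subset_Tmet n ⟨_, hi, by omega, rfl⟩
  · have hindex : 1 ≤ β * x + y := by
      have hslack : 0 ≤ β * (β * y + x - β) + n * β * (1 - y) :=
        add_nonneg (mul_nonneg hβ.le (sub_nonneg.2 hyellow))
          (mul_nonneg (by positivity) (sub_nonneg.2 hy.le))
      linear_combination hslack + (y - 1) * hsq
    rw [threshold_of_le hyellow]
    exact yellowH_subset_Tmet n ⟨_, Int.le_floor.2 (by exact_mod_cast hindex), by omega, rfl⟩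

theorem floor_eq_of_le_add (hn : 1 ≤ n) (hx : x < 1) (hy : y < 1) (hxβ : n + 1 ≤ x + β)
    (hyβ : n + 1 ≤ y + β) :
    ⌊β * x + y⌋ = threshold (n + 1) (β * x + y) + n ∧
      ⌊β * x + y + 1 - β⌋ = threshold β (β * x + y) := by
  have hn' : (1 : ℝ) ≤ n := by exact_mod_cast hn
  have hlt' := metallicMean_lt_add_one hn
  have hlow : n ≤ β * x + y := by nlinarith [metallicMean_sq n, lt_metallicMean n]
  have hupp : β * x + y < β + 1 := by nlinarith
  exact ⟨floor_eq_threshold_add hlow (by linarith) rfl, floor_add_one_sub (by linarith) hupp⟩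

theorem torusTile_eq_junctionTile (hn : 1 ≤ n) (hx : x < 1) (hy : y < 1) (hxβ : n + 1 ≤ x + β)
    (hyβ : n + 1 ≤ y + β) :
    torusTile n x y =
      junctionTile n (threshold (n + 1) (β * y + x)) (threshold β (β * x + y))
        (threshold (n + 1) (β * x + y)) (threshold β (β * y + x)) := by
  have hthreshold : ∀ a b : ℝ,
      threshold β (β * a + (b + β - (n + 1))) = threshold (n + 1) (β * a + b) := fun a b =>
    threshold_congr (by ring)
  have hfloor := floor_eq_of_le_add hn hx hy hxβ hyβ
  have hfloor' := floor_eq_of_le_add hn hy hx hyβ hxβ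
  simp only [torusTile, bottomLabel, if_neg hxβ.not_gt, if_neg hyβ.not_gt,
    fract_add_metallicMean_of_le hn hx hxβ, fract_add_metallicMean_of_le hn hy hyβ,
    metallicMean_mul_add_sub_add_one, hthreshold, hfloor, hfloor', junctionTile]

theorem metallicMean_le_mul_add_of_le (hn : 1 ≤ n) (hxβ : n + 1 ≤ x + β)
    (h : n + 1 ≤ β * y + x) : β ≤ β * x + y := by
  have hn' : (1 : ℝ) ≤ n := by exact_mod_cast hn
  have hβ : 0 < β := by linarith [lt_metallicMean n]
  refine le_of_mul_le_mul_left ?_ hβ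
  calc β * β ≤ β * β + (n * β * (x + β - (n + 1)) + (β * y + x - (n + 1))) :=
        le_add_of_nonneg_right (add_nonneg (mul_nonneg (by positivity) (sub_nonneg.2 hxβ))
          (sub_nonneg.2 h))
    _ = β * (β * x + y) := by linear_combination (n + 1 - x) * metallicMean_sq n

theorem torusTile_mem_Tmet_of_le_of_le (hn : 1 ≤ n) (hx : x < 1) (hy : y < 1)
    (hxβ : n + 1 ≤ x + β) (hyβ : n + 1 ≤ y + β) : torusTile n x y ∈ Tmet n := by
  have hlt := (metallicMean_lt_add_one hn).le
  rw [torusTile_eq_junctionTile hn hx hy hxβ hyβ]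
  exact junctionTile_mem_Tmet (threshold_mem_jPairs (metallicMean_le_mul_add_of_le hn hxβ))
    (threshold_mem_jPairs (metallicMean_le_mul_add_of_le hn hyβ))
    (threshold_eq_one_or_eq_zero hlt.trans) (threshold_eq_one_or_eq_zero hlt.trans)

theorem torusTile_mem_Tmet (hn : 1 ≤ n) (hx : x ∈ Set.Ico 0 1) (hy : y ∈ Set.Ico 0 1) :
    torusTile n x y ∈ Tmet n := by
  rcases lt_or_ge (x + β) (n + 1) with hxβ | hxβ <;>
    rcases lt_or_ge (y + β) (n + 1) with hyβ | hyβ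
  · exact whiteTiles_subset_Tmet n (torusTile_mem_whiteTiles hn hx.1 hy.1 hxβ hyβ)
  · exact torusTile_mem_Tmet_of_lt_of_le hn hx.1 hy.2 hxβ hyβ
  · exact mapsTo_hatT_Tmet n (torusTile_mem_Tmet_of_lt_of_le hn hy.1 hx.2 hyβ hxβ)
  · exact torusTile_mem_Tmet_of_le_of_le hn hx.2 hy.2 hxβ hyβ

theorem validConfig_torusTile_orbit (hn : 1 ≤ n) (p q : ℝ) :
    ValidConfig (Tmet n) fun m =>
      torusTile n (Int.fract (p + m.1 * β)) (Int.fract (q + m.2 * β)) := by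
  have hrot : ∀ (p : ℝ) (i : ℤ),
      Int.fract (Int.fract (p + i * β) + β) = Int.fract (p + (i + 1 : ℤ) * β) := fun p i =>
    Int.fract_eq_fract.2 ⟨-⌊p + i * β⌋, by push_cast; rw [Int.fract]; ring⟩
  refine ⟨fun m => torusTile_mem_Tmet hn ⟨Int.fract_nonneg _, Int.fract_lt_one _⟩
    ⟨Int.fract_nonneg _, Int.fract_lt_one _⟩, fun m => ?_, fun m => ?_⟩
  · simp only [torusTile, hrot]
  · simp only [torusTile, hrot]

end TorusCoding

theorem stmt16_general {n : ℤ} (hn : 1 ≤ n) {T : Set (WangTile Lbl)} (hT : Tmet n ⊆ T)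
    (hT' : T ⊆ Text n) :
    (∃ x : ℤ × ℤ → WangTile Lbl, ValidConfig T x) ∧
    ∀ x : ℤ × ℤ → WangTile Lbl, ValidConfig T x →
      ∀ k : ℤ × ℤ, k ≠ (0, 0) →
        (fun m : ℤ × ℤ => x (m.1 + k.1, m.2 + k.2)) ≠ x :=
  ⟨⟨_, (validConfig_torusTile_orbit hn 0 0).mono hT⟩,
    fun _ hx _ hk hper => (hx.mono hT').not_periodic hn hk (congrFun hper)⟩

/-- the Wang shift `Ω_n` is aperiodic. -/
theorem stmt16 (n : ℤ) (hn : 1 ≤ n) :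
    (∃ x : ℤ × ℤ → WangTile Lbl, ValidConfig (Tmet n) x) ∧
    ∀ x : ℤ × ℤ → WangTile Lbl, ValidConfig (Tmet n) x →
      ∀ k : ℤ × ℤ, k ≠ (0, 0) →
        (fun m : ℤ × ℤ => x (m.1 + k.1, m.2 + k.2)) ≠ x :=
  stmt16_general hn subset_rfl Set.sdiff_subset
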